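/- Define, for ρ > 0, F(ρ) = ∫₀^∞ ξ · K₁(√(1 + ρ⁻¹) · ξ) · I₁(ξ) · log I₁(ξ) dξ. Then lim_{ρ → ∞} ( ρ⁻¹ · √(1 + ρ⁻¹) · F(ρ) − 2ρ + (1/2) · log ρ ) / log ρ = 0; that is, the term ρ⁻¹ √(1+ρ⁻¹) F(ρ) equals 2ρ − (1/2) log ρ + o(log ρ) as ρ → ∞. -/

import Mathlib

open Real MeasureTheory Set Filter

/-- Modified Bessel function of the first kind of order one,
`I₁(z) = ∑_{k=0}^∞ (z/2)^(2k+1) / (k! (k+1)!)`. -/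
noncomputable def besselI1 (z : ℝ) : ℝ :=
  ∑' k : ℕ, (z / 2) ^ (2 * k + 1) / ((Nat.factorial k : ℝ) * (Nat.factorial (k + 1) : ℝ))

/-- Modified Bessel function of the second kind of order one,
`K₁(z) = ∫₀^∞ exp (−z cosh t) cosh t dt`. -/
noncomputable def besselK1 (z : ℝ) : ℝ :=
  ∫ t in Ioi (0 : ℝ), Real.exp (-z * Real.cosh t) * Real.cosh t

/-- Digamma function `ψ(x) = d/dx log Γ(x)`. -/
noncomputable def digamma (x : ℝ) : ℝ :=
  deriv (fun y : ℝ => Real.log (Real.Gamma y)) x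

/-- Conditional output density of the noncentral chi channel with four degrees of freedom. -/
noncomputable def condDensity (σN x y : ℝ) : ℝ :=
  (2 / σN ^ 2) * (y ^ 2 / x) * Real.exp (-(x ^ 2 + y ^ 2) / σN ^ 2) *
    besselI1 (2 * x * y / σN ^ 2)

/-- Rayleigh input density with mean-square `σS²`. -/
noncomputable def rayleighDensity (σS x : ℝ) : ℝ :=
  (2 * x / σS ^ 2) * Real.exp (-x ^ 2 / σS ^ 2)

/-- `F(ρ) = ∫₀^∞ ξ K₁(√(1+ρ⁻¹) ξ) I₁(ξ) log I₁(ξ) dξ`. -/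
noncomputable def Fint (ρ : ℝ) : ℝ :=
  ∫ ξ in Ioi (0 : ℝ),
    ξ * besselK1 (Real.sqrt (1 + ρ⁻¹) * ξ) * besselI1 ξ * Real.log (besselI1 ξ)

/-- Closed-form mutual information of Theorem 1. -/
noncomputable def Ixy (ρ : ℝ) : ℝ :=
  Real.log (ρ * Real.sqrt (1 + ρ⁻¹)) + ρ⁻¹ * Real.log (Real.sqrt (1 + ρ)) - ρ +
    ρ⁻¹ * Real.sqrt (1 + ρ⁻¹) * Fint ρ + digamma ρ⁻¹ - digamma 1 - 1

/-!
Half-angle substitutions turn `K₁` and `I₁` into Gaussian integrals, which give two-sided bounds by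
the leading terms `√(π / (2x)) e^{-x}` and `e^x / √(2πx)` up to relative error `O(1/x)`. Hence
`ξ K₁(aξ) I₁(ξ) = e^{-(a-1)ξ} / (2√a) · (1 + O(1/ξ))` uniformly in `a ≥ 1`, while
`log I₁(ξ) = ξ - (log ξ) / 2 + O(1)`. Put `a = √(1 + ρ⁻¹)` and `δ = a - 1 ~ 1 / (2ρ)`: the Laplace
transforms of `ξ` and `log ξ` at `δ` give
`F(ρ) = (1 / δ² + log δ / (2δ)) / (2√a) + O(1 / δ)`,
and multiplication by `ρ⁻¹ a = δ (2 + δ) (1 + δ)` yields `2ρ - (log ρ) / 2 + O(1)`.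
-/

open Asymptotics
open scoped Nat Topology

section GaussianMoments

variable {b : ℝ}

theorem integrableOn_pow_mul_exp_neg_mul_sq_Ioi (hb : 0 < b) (n : ℕ) :
    IntegrableOn (fun s : ℝ => s ^ n * exp (-b * s ^ 2)) (Ioi 0) := by
  simpa only [rpow_natCast] using integrableOn_rpow_mul_exp_neg_mul_sq hb
    (neg_one_lt_zero.trans_le (Nat.cast_nonneg n))

theorem integral_pow_add_two_mul_exp_neg_mul_sq_Ioi (hb : 0 < b) (n : ℕ) :
    ∫ s in Ioi (0 : ℝ), s ^ (n + 2) * exp (-b * s ^ 2) =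
      (n + 1) / (2 * b) * ∫ s in Ioi (0 : ℝ), s ^ n * exp (-b * s ^ 2) := by
  have moment (m : ℕ) : ∫ s in Ioi (0 : ℝ), s ^ m * exp (-b * s ^ 2) =
      b ^ (-((m : ℝ) + 1) / 2) * (1 / 2) * Gamma (((m : ℝ) + 1) / 2) := by
    simpa only [rpow_two, rpow_natCast] using integral_rpow_mul_exp_neg_mul_rpow (p := 2)
      two_pos (neg_one_lt_zero.trans_le (Nat.cast_nonneg m)) hb
  rw [moment, moment, Nat.cast_add, Nat.cast_two,
    show ((n : ℝ) + 2 + 1) / 2 = (n + 1) / 2 + 1 by ring, Gamma_add_one (by positivity),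
    show -((n : ℝ) + 2 + 1) / 2 = -(n + 1) / 2 - 1 by ring, rpow_sub_one hb.ne']
  field_simp

theorem integral_sq_mul_exp_neg_mul_sq_Ioi (hb : 0 < b) :
    ∫ s in Ioi (0 : ℝ), s ^ 2 * exp (-b * s ^ 2) = √(π / b) / (4 * b) := by
  have h := integral_pow_add_two_mul_exp_neg_mul_sq_Ioi hb 0
  simp only [zero_add, pow_zero, one_mul, Nat.cast_zero, integral_gaussian_Ioi] at h
  rw [h]
  ring

theorem integral_pow_four_mul_exp_neg_mul_sq_Ioi (hb : 0 < b) :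
    ∫ s in Ioi (0 : ℝ), s ^ 4 * exp (-b * s ^ 2) = 3 * √(π / b) / (8 * b ^ 2) := by
  rw [integral_pow_add_two_mul_exp_neg_mul_sq_Ioi hb 2, integral_sq_mul_exp_neg_mul_sq_Ioi hb]
  push_cast
  ring

end GaussianMoments

section HalfAngleSubstitution

variable {E : Type*} [NormedAddCommGroup E] [NormedSpace ℝ E]

theorem integral_comp_sinh_half_smul (g : ℝ → E) :
    ∫ t in Ioi (0 : ℝ), (cosh (t / 2) / 2) • g (sinh (t / 2)) = ∫ s in Ioi (0 : ℝ), g s := by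
  have hderiv (t : ℝ) : HasDerivAt (fun t : ℝ => sinh (t / 2)) (cosh (t / 2) / 2) t := by
    simpa [div_eq_mul_inv] using ((hasDerivAt_id t).div_const 2).sinh
  have hinj : InjOn (fun t : ℝ => sinh (t / 2)) (Ioi 0) :=
    (sinh_injective.comp fun _ _ => (div_left_inj' two_ne_zero).1).injOn
  have himage : (fun t : ℝ => sinh (t / 2)) '' Ioi 0 = Ioi 0 := by
    ext s
    constructor
    · rintro ⟨t, ht, rfl⟩
      exact sinh_pos_iff.2 (half_pos ht)
    · exact fun hs => ⟨2 * arsinh s, mem_Ioi.2 (mul_pos two_pos (arsinh_pos_iff.2 hs)), by simp⟩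
  have h := integral_image_eq_integral_abs_deriv_smul measurableSet_Ioi
    (fun t _ => (hderiv t).hasDerivWithinAt) hinj g
  simpa only [himage, abs_of_pos (half_pos (cosh_pos _))] using h.symm

theorem integral_comp_sin_half_smul [CompleteSpace E] {g : ℝ → E} (hg : Continuous g) :
    ∫ θ in (0 : ℝ)..π, (cos (θ / 2) / 2) • g (sin (θ / 2)) = ∫ s in (0 : ℝ)..1, g s := by
  have hderiv (θ : ℝ) : HasDerivAt (fun θ : ℝ => sin (θ / 2)) (cos (θ / 2) / 2) θ := by
    simpa [div_eq_mul_inv] using ((hasDerivAt_id θ).div_const 2).sin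
  simpa using intervalIntegral.integral_deriv_smul_comp (a := 0) (b := π)
    (fun θ _ => hderiv θ) (by fun_prop) hg

end HalfAngleSubstitution

section BesselK1

variable {x : ℝ}

/-- The substitution is `s = sinh (t / 2)`. -/
theorem besselK1_eq_integral_gaussian (x : ℝ) :
    besselK1 x = 2 * exp (-x) *
      ∫ s in Ioi (0 : ℝ), (1 + 2 * s ^ 2) / √(1 + s ^ 2) * exp (-(2 * x) * s ^ 2) := by
  rw [← integral_const_mul, ← integral_comp_sinh_half_smul, besselK1]
  congr 1 with t
  have hcosh : cosh t = 1 + 2 * sinh (t / 2) ^ 2 := by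
    rw [← mul_div_cancel₀ t two_ne_zero, cosh_two_mul, cosh_sq, mul_div_cancel₀ t two_ne_zero]
    ring
  have hexp : exp (-x * cosh t) = exp (-x) * exp (-(2 * x) * sinh (t / 2) ^ 2) := by
    rw [hcosh, ← exp_add]
    ring_nf
  rw [hexp, hcosh, ← cosh_sq', sqrt_sq (cosh_pos _).le, smul_eq_mul]
  field_simp

theorem one_le_one_add_two_mul_div_sqrt {u : ℝ} (hu : 0 ≤ u) : 1 ≤ (1 + 2 * u) / √(1 + u) := by
  rw [one_le_div (by positivity)]
  exact sqrt_le_iff.2 ⟨by positivity, by nlinarith⟩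

theorem one_add_two_mul_div_sqrt_le {u : ℝ} (hu : 0 ≤ u) :
    (1 + 2 * u) / √(1 + u) ≤ 1 + 2 * u :=
  div_le_self (by positivity) (one_le_sqrt.2 (by linarith))

theorem integrableOn_one_add_two_mul_sq_mul_exp_neg_mul_sq {b : ℝ} (hb : 0 < b) :
    IntegrableOn (fun s : ℝ => (1 + 2 * s ^ 2) * exp (-b * s ^ 2)) (Ioi 0) := by
  have h0 := integrableOn_pow_mul_exp_neg_mul_sq_Ioi hb 0
  have h2 := integrableOn_pow_mul_exp_neg_mul_sq_Ioi hb 2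
  refine (h0.add (h2.const_mul 2)).congr_fun (fun s _ => ?_) measurableSet_Ioi
  simp only [Pi.add_apply]
  ring

theorem integrableOn_besselK1_gaussian {b : ℝ} (hb : 0 < b) :
    IntegrableOn (fun s : ℝ => (1 + 2 * s ^ 2) / √(1 + s ^ 2) * exp (-b * s ^ 2)) (Ioi 0) := by
  refine Integrable.mono' (integrableOn_one_add_two_mul_sq_mul_exp_neg_mul_sq hb)
    (by fun_prop : Measurable _).aestronglyMeasurable (ae_of_all _ fun s => ?_)
  rw [norm_of_nonneg (by positivity)]
  gcongr
  exact one_add_two_mul_div_sqrt_le (sq_nonneg s)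

theorem le_besselK1 (hx : 0 < x) : √(π / (2 * x)) * exp (-x) ≤ besselK1 x := by
  have hb : 0 < 2 * x := by positivity
  calc √(π / (2 * x)) * exp (-x)
      = 2 * exp (-x) * ∫ s in Ioi (0 : ℝ), exp (-(2 * x) * s ^ 2) := by
        rw [integral_gaussian_Ioi]
        ring
    _ ≤ besselK1 x := by
        rw [besselK1_eq_integral_gaussian]
        gcongr ?_ * ?_
        refine setIntegral_mono (integrable_exp_neg_mul_sq hb).integrableOn
          (integrableOn_besselK1_gaussian hb) fun s => ?_
        exact le_mul_of_one_le_left (exp_pos _).le (one_le_one_add_two_mul_div_sqrt (sq_nonneg s))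

theorem besselK1_le (hx : 0 < x) :
    besselK1 x ≤ √(π / (2 * x)) * exp (-x) * (1 + 1 / (2 * x)) := by
  have hb : 0 < 2 * x := by positivity
  calc besselK1 x
      ≤ 2 * exp (-x) * ∫ s in Ioi (0 : ℝ), (1 + 2 * s ^ 2) * exp (-(2 * x) * s ^ 2) := by
        rw [besselK1_eq_integral_gaussian]
        gcongr ?_ * ?_
        refine setIntegral_mono (integrableOn_besselK1_gaussian hb)
          (integrableOn_one_add_two_mul_sq_mul_exp_neg_mul_sq hb) fun s => ?_
        dsimp only
        gcongr
        exact one_add_two_mul_div_sqrt_le (sq_nonneg s)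
    _ = _ := by
        simp only [add_mul, one_mul, mul_assoc]
        rw [integral_add (integrable_exp_neg_mul_sq hb).integrableOn
            ((integrableOn_pow_mul_exp_neg_mul_sq_Ioi hb 2).const_mul 2), integral_const_mul,
          integral_gaussian_Ioi, integral_sq_mul_exp_neg_mul_sq_Ioi hb]
        field_simp
        ring

theorem besselK1_pos (hx : 0 < x) : 0 < besselK1 x :=
  lt_of_lt_of_le (by positivity) (le_besselK1 hx)

theorem measurable_besselK1 : Measurable besselK1 := by
  have h : StronglyMeasurable (Function.uncurry fun x t : ℝ => exp (-x * cosh t) * cosh t) :=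
    Continuous.stronglyMeasurable (by fun_prop)
  exact h.integral_prod_right.measurable

end BesselK1

section BesselI1

variable {x : ℝ}

theorem integral_cos_pow_even_zero_pi (k : ℕ) :
    ∫ θ in (0 : ℝ)..π, cos θ ^ (2 * k) = π * (2 * k)! / (4 ^ k * (k ! : ℝ) ^ 2) := by
  induction k with
  | zero => simp
  | succ k ih =>
    rw [mul_add_one, integral_cos_pow, ih]
    simp only [sin_pi, sin_zero, Nat.factorial_succ]
    push_cast
    field_simp
    ring

theorem integral_cos_pow_even_mul_sin_sq_zero_pi (k : ℕ) :
    ∫ θ in (0 : ℝ)..π, cos θ ^ (2 * k) * sin θ ^ 2 =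
      π * (2 * k)! / (2 ^ (2 * k + 1) * (k ! : ℝ) * (k + 1)!) := by
  have hsin (θ : ℝ) : cos θ ^ (2 * k) * sin θ ^ 2 = cos θ ^ (2 * k) - cos θ ^ (2 * (k + 1)) := by
    rw [sin_sq]
    ring
  simp only [hsin]
  rw [intervalIntegral.integral_sub (Continuous.intervalIntegrable (by fun_prop) _ _)
    (Continuous.intervalIntegrable (by fun_prop) _ _), integral_cos_pow_even_zero_pi,
    integral_cos_pow_even_zero_pi, mul_add_one]
  simp only [Nat.factorial_succ, pow_succ, pow_mul]
  push_cast
  field_simp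
  norm_num
  ring

theorem hasSum_integral_cosh_mul_cos_mul_sin_sq (x : ℝ) :
    HasSum (fun k : ℕ => x ^ (2 * k) / (2 * k)! * ∫ θ in (0 : ℝ)..π, cos θ ^ (2 * k) * sin θ ^ 2)
      (∫ θ in (0 : ℝ)..π, cosh (x * cos θ) * sin θ ^ 2) := by
  simp only [← intervalIntegral.integral_const_mul]
  refine intervalIntegral.hasSum_integral_of_dominated_convergence
    (fun k _ => x ^ (2 * k) / (2 * k)!) (fun k => ?_) (fun k => ae_of_all _ fun θ _ => ?_)
    (ae_of_all _ fun _ _ => (hasSum_cosh x).summable) intervalIntegrable_const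
    (ae_of_all _ fun θ _ => ?_)
  · exact Continuous.aestronglyMeasurable (by fun_prop)
  · have hx : 0 ≤ x ^ (2 * k) / (2 * k)! := by
      rw [pow_mul]
      positivity
    have hcos : |cos θ ^ (2 * k)| ≤ 1 := by
      rw [abs_pow]
      exact pow_le_one₀ (abs_nonneg _) (abs_cos_le_one θ)
    have hsin : |sin θ ^ 2| ≤ 1 := by
      rw [abs_of_nonneg (sq_nonneg _)]
      exact sin_sq_le_one θ
    rw [norm_mul, norm_mul, norm_of_nonneg hx]
    exact mul_le_of_le_one_right hx (mul_le_one₀ hcos (abs_nonneg _) hsin)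
  · convert! (hasSum_cosh (x * cos θ)).mul_right (sin θ ^ 2) using 2
    ring

/-- Poisson's integral. -/
theorem besselI1_eq_integral_cosh (x : ℝ) :
    besselI1 x = x / π * ∫ θ in (0 : ℝ)..π, cosh (x * cos θ) * sin θ ^ 2 := by
  rw [← ((hasSum_integral_cosh_mul_cos_mul_sin_sq x).mul_left (x / π)).tsum_eq, besselI1]
  congr 1 with k
  rw [integral_cos_pow_even_mul_sin_sq_zero_pi, div_pow, pow_succ x]
  field_simp

theorem besselI1_eq_integral_exp (x : ℝ) :
    besselI1 x = x / π * ∫ θ in (0 : ℝ)..π, exp (x * cos θ) * sin θ ^ 2 := by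
  have hsymm : ∫ θ in (0 : ℝ)..π, exp (-(x * cos θ)) * sin θ ^ 2 =
      ∫ θ in (0 : ℝ)..π, exp (x * cos θ) * sin θ ^ 2 := by
    simpa [cos_pi_sub, sin_pi_sub] using intervalIntegral.integral_comp_sub_left (a := 0) (b := π)
      (fun θ => exp (x * cos θ) * sin θ ^ 2) π
  simp only [besselI1_eq_integral_cosh, cosh_eq, add_div, add_mul, div_mul_eq_mul_div]
  rw [intervalIntegral.integral_add (Continuous.intervalIntegrable (by fun_prop) _ _)
    (Continuous.intervalIntegrable (by fun_prop) _ _), intervalIntegral.integral_div,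
    intervalIntegral.integral_div, hsymm]
  ring

theorem half_le_besselI1 (hx : 0 ≤ x) : x / 2 ≤ besselI1 x := by
  have hle : ∫ θ in (0 : ℝ)..π, sin θ ^ 2 ≤ ∫ θ in (0 : ℝ)..π, cosh (x * cos θ) * sin θ ^ 2 :=
    intervalIntegral.integral_mono pi_pos.le (Continuous.intervalIntegrable (by fun_prop) _ _)
      (Continuous.intervalIntegrable (by fun_prop) _ _)
      fun θ => le_mul_of_one_le_left (sq_nonneg _) (one_le_cosh _)
  calc x / 2 = x / π * ∫ θ in (0 : ℝ)..π, sin θ ^ 2 := by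
        simp only [integral_sin_sq, sin_zero, sin_pi, zero_mul, sub_zero, zero_add]
        field_simp
    _ ≤ besselI1 x := by
        rw [besselI1_eq_integral_cosh]
        gcongr

theorem besselI1_le_half_mul_cosh (hx : 0 ≤ x) : besselI1 x ≤ x / 2 * cosh x := by
  have hle : ∫ θ in (0 : ℝ)..π, cosh (x * cos θ) * sin θ ^ 2 ≤
      ∫ θ in (0 : ℝ)..π, cosh x * sin θ ^ 2 := by
    refine intervalIntegral.integral_mono pi_pos.le
      (Continuous.intervalIntegrable (by fun_prop) _ _)
      (Continuous.intervalIntegrable (by fun_prop) _ _) fun θ => ?_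
    dsimp only
    gcongr
    rw [cosh_le_cosh, abs_mul]
    exact mul_le_of_le_one_right (abs_nonneg x) (abs_cos_le_one θ)
  calc besselI1 x ≤ x / π * ∫ θ in (0 : ℝ)..π, cosh x * sin θ ^ 2 := by
        rw [besselI1_eq_integral_cosh]
        gcongr
    _ = x / 2 * cosh x := by
        simp only [intervalIntegral.integral_const_mul, integral_sin_sq, sin_zero, sin_pi,
          zero_mul, sub_zero, zero_add]
        field_simp

theorem besselI1_pos (hx : 0 < x) : 0 < besselI1 x :=
  (half_pos hx).trans_le (half_le_besselI1 hx.le)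

/-- The substitution is `s = sin (θ / 2)`. The integrand vanishes for `s > 1`, where the square
root of the negative number `1 - s ^ 2` is `0`. -/
theorem besselI1_eq_integral_gaussian (x : ℝ) :
    besselI1 x = 8 * x / π * exp x *
      ∫ s in Ioi (0 : ℝ), s ^ 2 * √(1 - s ^ 2) * exp (-(2 * x) * s ^ 2) := by
  have hsubst : ∫ θ in (0 : ℝ)..π, exp (x * cos θ) * sin θ ^ 2 =
      ∫ s in (0 : ℝ)..1, 8 * exp x * (s ^ 2 * √(1 - s ^ 2) * exp (-(2 * x) * s ^ 2)) := by
    rw [← integral_comp_sin_half_smul (by fun_prop)]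
    refine intervalIntegral.integral_congr fun θ hθ => ?_
    rw [uIcc_of_le pi_pos.le] at hθ
    have hsqrt : √(1 - sin (θ / 2) ^ 2) = cos (θ / 2) :=
      (cos_eq_sqrt_one_sub_sin_sq (by linarith [hθ.1, pi_pos]) (by linarith [hθ.2])).symm
    have hcos : cos θ = 1 - 2 * sin (θ / 2) ^ 2 := by
      rw [← mul_div_cancel₀ θ two_ne_zero, cos_two_mul, cos_sq', mul_div_cancel₀ θ two_ne_zero]
      ring
    have hsin : sin θ = 2 * sin (θ / 2) * cos (θ / 2) := by
      rw [← sin_two_mul, mul_div_cancel₀ θ two_ne_zero]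
    have hexp : exp (x * cos θ) = exp x * exp (-(2 * x) * sin (θ / 2) ^ 2) := by
      rw [hcos, ← exp_add]
      ring_nf
    simp only [hexp, hsqrt, hsin, smul_eq_mul]
    ring
  have hextend : ∫ s in (0 : ℝ)..1, s ^ 2 * √(1 - s ^ 2) * exp (-(2 * x) * s ^ 2) =
      ∫ s in Ioi (0 : ℝ), s ^ 2 * √(1 - s ^ 2) * exp (-(2 * x) * s ^ 2) := by
    rw [intervalIntegral.integral_of_le zero_le_one]
    refine (setIntegral_eq_of_subset_of_forall_sdiff_eq_zero measurableSet_Ioi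
      Ioc_subset_Ioi_self fun s hs => ?_).symm
    have hs1 : 1 < s := not_le.1 fun h => hs.2 ⟨hs.1, h⟩
    rw [sqrt_eq_zero_of_nonpos (by nlinarith), mul_zero, zero_mul]
  rw [besselI1_eq_integral_exp, hsubst, intervalIntegral.integral_const_mul, hextend]
  ring

theorem one_sub_le_sqrt_one_sub {u : ℝ} (hu : 0 ≤ u) : 1 - u ≤ √(1 - u) := by
  rcases le_total u 1 with h | h
  · exact le_sqrt_of_sq_le (by nlinarith)
  · exact (sub_nonpos.2 h).trans (sqrt_nonneg _)

theorem integrableOn_besselI1_gaussian {b : ℝ} (hb : 0 < b) :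
    IntegrableOn (fun s : ℝ => s ^ 2 * √(1 - s ^ 2) * exp (-b * s ^ 2)) (Ioi 0) := by
  refine Integrable.mono' (integrableOn_pow_mul_exp_neg_mul_sq_Ioi hb 2)
    (by fun_prop : Measurable _).aestronglyMeasurable (ae_of_all _ fun s => ?_)
  rw [norm_of_nonneg (by positivity)]
  gcongr
  exact mul_le_of_le_one_right (sq_nonneg s) (sqrt_le_one.2 (by linarith [sq_nonneg s]))

theorem sqrt_pi_div_two_mul (hx : 0 < x) : √(π / (2 * x)) = π / √(2 * π * x) := by
  rw [eq_div_iff (by positivity), ← sqrt_mul (by positivity),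
    show π / (2 * x) * (2 * π * x) = π * π by field_simp, sqrt_mul_self pi_pos.le]

theorem besselI1_le (hx : 0 < x) : besselI1 x ≤ exp x / √(2 * π * x) := by
  have hb : 0 < 2 * x := by positivity
  calc besselI1 x
      ≤ 8 * x / π * exp x * ∫ s in Ioi (0 : ℝ), s ^ 2 * exp (-(2 * x) * s ^ 2) := by
        rw [besselI1_eq_integral_gaussian]
        gcongr ?_ * ?_
        refine setIntegral_mono (integrableOn_besselI1_gaussian hb)
          (integrableOn_pow_mul_exp_neg_mul_sq_Ioi hb 2) fun s => ?_
        dsimp only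
        gcongr
        exact mul_le_of_le_one_right (sq_nonneg s) (sqrt_le_one.2 (by linarith [sq_nonneg s]))
    _ = exp x / √(2 * π * x) := by
        rw [integral_sq_mul_exp_neg_mul_sq_Ioi hb, sqrt_pi_div_two_mul hx]
        field_simp
        norm_num

theorem le_besselI1 (hx : 0 < x) :
    exp x / √(2 * π * x) * (1 - 3 / (4 * x)) ≤ besselI1 x := by
  have hb : 0 < 2 * x := by positivity
  have h2 := integrableOn_pow_mul_exp_neg_mul_sq_Ioi hb 2
  have h4 := integrableOn_pow_mul_exp_neg_mul_sq_Ioi hb 4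
  calc exp x / √(2 * π * x) * (1 - 3 / (4 * x))
      = 8 * x / π * exp x * ∫ s in Ioi (0 : ℝ),
          (s ^ 2 * exp (-(2 * x) * s ^ 2) - s ^ 4 * exp (-(2 * x) * s ^ 2)) := by
        rw [integral_sub h2 h4, integral_sq_mul_exp_neg_mul_sq_Ioi hb,
          integral_pow_four_mul_exp_neg_mul_sq_Ioi hb, sqrt_pi_div_two_mul hx]
        field_simp
        ring
    _ ≤ besselI1 x := by
        rw [besselI1_eq_integral_gaussian]
        gcongr ?_ * ?_
        refine setIntegral_mono (h2.sub h4) (integrableOn_besselI1_gaussian hb) fun s => ?_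
        calc s ^ 2 * exp (-(2 * x) * s ^ 2) - s ^ 4 * exp (-(2 * x) * s ^ 2)
            = s ^ 2 * (1 - s ^ 2) * exp (-(2 * x) * s ^ 2) := by ring
          _ ≤ s ^ 2 * √(1 - s ^ 2) * exp (-(2 * x) * s ^ 2) := by
            gcongr
            exact one_sub_le_sqrt_one_sub (sq_nonneg s)

theorem measurable_besselI1 : Measurable besselI1 := by
  have h : StronglyMeasurable (Function.uncurry fun x θ : ℝ => exp (x * cos θ) * sin θ ^ 2) :=
    Continuous.stronglyMeasurable (by fun_prop)
  have heq : besselI1 = fun x => x / π * ∫ θ in Ioc 0 π, exp (x * cos θ) * sin θ ^ 2 := by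
    ext x
    rw [besselI1_eq_integral_exp, intervalIntegral.integral_of_le pi_pos.le]
  rw [heq]
  exact (measurable_id.div_const π).mul h.integral_prod_right.measurable

end BesselI1

section Integrand

variable {a ξ : ℝ}

/-- The weight against which `Fint` integrates `log I₁`: `Fint ρ` uses `a = √(1 + ρ⁻¹)`. -/
noncomputable def besselWeight (a ξ : ℝ) : ℝ :=
  ξ * besselK1 (a * ξ) * besselI1 ξ

/-- The leading term of `besselWeight a ξ` as `ξ → ∞`. -/
noncomputable def expWeight (a ξ : ℝ) : ℝ :=
  exp (-(a - 1) * ξ) / (2 * √a)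

theorem besselWeight_pos (ha : 0 < a) (hξ : 0 < ξ) : 0 < besselWeight a ξ :=
  mul_pos (mul_pos hξ (besselK1_pos (mul_pos ha hξ))) (besselI1_pos hξ)

theorem expWeight_pos (ha : 0 < a) (ξ : ℝ) : 0 < expWeight a ξ :=
  div_pos (exp_pos _) (by positivity)

theorem expWeight_le (ha : 1 ≤ a) (ξ : ℝ) : expWeight a ξ ≤ 1 / 2 * exp (-(a - 1) * ξ) := by
  rw [expWeight, div_eq_inv_mul, ← one_div]
  gcongr
  linarith [one_le_sqrt.2 ha]

theorem mul_leading_besselK1_mul_leading_besselI1 (ha : 0 < a) (hξ : 0 < ξ) :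
    ξ * (√(π / (2 * (a * ξ))) * exp (-(a * ξ))) * (exp ξ / √(2 * π * ξ)) = expWeight a ξ := by
  have hsqrt : √(2 * π * (a * ξ)) = √a * √(2 * π * ξ) := by
    rw [← sqrt_mul ha.le]
    ring_nf
  have hexp : exp (-(a - 1) * ξ) = exp (-(a * ξ)) * exp ξ := by
    rw [← exp_add]
    ring_nf
  rw [expWeight, sqrt_pi_div_two_mul (mul_pos ha hξ), hsqrt, hexp]
  field_simp
  rw [sq_sqrt (by positivity)]

theorem abs_besselWeight_sub_expWeight_le_div (ha : 1 ≤ a) (hξ : 0 < ξ) :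
    |besselWeight a ξ - expWeight a ξ| ≤ expWeight a ξ / ξ := by
  have ha0 : 0 < a := by linarith
  have haξ : 0 < a * ξ := mul_pos ha0 hξ
  have hI := besselI1_pos hξ
  have hM := expWeight_pos ha0 ξ
  have hlead := mul_leading_besselK1_mul_leading_besselI1 ha0 hξ
  have hupper : besselWeight a ξ ≤ expWeight a ξ * (1 + 1 / ξ) := by
    calc besselWeight a ξ
        ≤ ξ * (√(π / (2 * (a * ξ))) * exp (-(a * ξ)) * (1 + 1 / (2 * (a * ξ)))) *
            (exp ξ / √(2 * π * ξ)) := by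
          rw [besselWeight]
          gcongr
          exacts [besselK1_le haξ, besselI1_le hξ]
      _ = expWeight a ξ * (1 + 1 / (2 * (a * ξ))) := by
          rw [← hlead]
          ring
      _ ≤ expWeight a ξ * (1 + 1 / ξ) := by
          gcongr
          nlinarith
  have hlower : expWeight a ξ * (1 - 1 / ξ) ≤ besselWeight a ξ := by
    calc expWeight a ξ * (1 - 1 / ξ) ≤ expWeight a ξ * (1 - 3 / (4 * ξ)) := by
          gcongr _ * (1 - ?_)
          rw [div_le_div_iff₀ (by positivity) hξ]
          linarith
      _ = ξ * (√(π / (2 * (a * ξ))) * exp (-(a * ξ))) *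
            (exp ξ / √(2 * π * ξ) * (1 - 3 / (4 * ξ))) := by
          rw [← hlead]
          ring
      _ ≤ ξ * (√(π / (2 * (a * ξ))) * exp (-(a * ξ))) * besselI1 ξ := by
          gcongr
          exact le_besselI1 hξ
      _ ≤ besselWeight a ξ := by
          rw [besselWeight]
          gcongr
          exact le_besselK1 haξ
  rw [abs_le]
  exact ⟨by linear_combination hlower, by linear_combination hupper⟩

theorem besselWeight_le_of_le_one (ha : 1 ≤ a) (hξ : 0 < ξ) (hξ1 : ξ ≤ 1) :
    besselWeight a ξ ≤ 2 * exp (-(a - 1) * ξ) := by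
  have ha0 : 0 < a := by linarith
  have haξ : 0 < a * ξ := mul_pos ha0 hξ
  have hI0 := besselI1_pos hξ
  have hI : besselI1 ξ ≤ ξ / 2 * exp ξ := by
    refine (besselI1_le_half_mul_cosh hξ.le).trans ?_
    gcongr
    rw [cosh_eq]
    linarith [exp_le_exp.2 (by linarith : -ξ ≤ ξ)]
  have hsqrt : √(π / (2 * (a * ξ))) ≤ 2 / ξ := by
    refine sqrt_le_iff.2 ⟨by positivity, ?_⟩
    rw [div_pow, div_le_div_iff₀ (by positivity) (by positivity)]
    have hξa : ξ ^ 2 ≤ a * ξ := by nlinarith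
    nlinarith [pi_le_four, pi_pos]
  calc besselWeight a ξ
      ≤ ξ * (2 / ξ * exp (-(a * ξ)) * (1 + 1 / (2 * (a * ξ)))) * (ξ / 2 * exp ξ) := by
        rw [besselWeight]
        gcongr
        refine (besselK1_le haξ).trans ?_
        gcongr
    _ = (ξ + 1 / (2 * a)) * exp (-(a - 1) * ξ) := by
        rw [show -(a - 1) * ξ = -(a * ξ) + ξ by ring, exp_add]
        field_simp
    _ ≤ 2 * exp (-(a - 1) * ξ) := by
        have hinv : 1 / (2 * a) ≤ 1 := (div_le_one (by positivity)).2 (by linarith)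
        gcongr
        linarith

theorem abs_besselWeight_sub_expWeight_le (ha : 1 ≤ a) (hξ : 0 < ξ) :
    |besselWeight a ξ - expWeight a ξ| ≤ 4 * exp (-(a - 1) * ξ) / (1 + ξ) := by
  have hM := expWeight_le ha ξ
  have hM0 := expWeight_pos (zero_lt_one.trans_le ha) ξ
  rcases le_total ξ 1 with h | h
  · have hW := besselWeight_le_of_le_one ha hξ h
    have hW0 := besselWeight_pos (zero_lt_one.trans_le ha) hξ
    calc |besselWeight a ξ - expWeight a ξ| ≤ 4 * exp (-(a - 1) * ξ) / 2 :=
          abs_sub_le_iff.2 ⟨by linarith, by linarith⟩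
      _ ≤ 4 * exp (-(a - 1) * ξ) / (1 + ξ) := by
          gcongr
          linarith
  · calc |besselWeight a ξ - expWeight a ξ| ≤ expWeight a ξ / ξ :=
          abs_besselWeight_sub_expWeight_le_div ha hξ
      _ ≤ 4 * exp (-(a - 1) * ξ) / (2 * ξ) := by
          rw [div_le_div_iff₀ hξ (by positivity)]
          nlinarith
      _ ≤ 4 * exp (-(a - 1) * ξ) / (1 + ξ) := by
          gcongr
          linarith

theorem abs_log_le_add_two_mul_rpow (hξ : 0 < ξ) : |log ξ| ≤ ξ + 2 * ξ ^ (-(1 / 2) : ℝ) := by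
  have hq : 0 < ξ ^ (-(1 / 2) : ℝ) := rpow_pos_of_pos hξ _
  have hupper := log_le_sub_one_of_pos hξ
  have hlower := log_le_sub_one_of_pos hq
  rw [log_rpow hξ] at hlower
  rw [abs_le]
  constructor <;> linarith

theorem log_besselI1_le (hξ : 0 < ξ) : log (besselI1 ξ) ≤ ξ - 1 / 2 * log ξ := by
  have hpi : 0 ≤ log (2 * π) := log_nonneg (by linarith [pi_gt_three])
  have h := log_le_log (besselI1_pos hξ) (besselI1_le hξ)
  rw [log_div (exp_pos _).ne' (by positivity), log_exp, log_sqrt (by positivity),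
    log_mul (by positivity) hξ.ne'] at h
  linarith

theorem le_log_besselI1_of_one_le (hξ : 1 ≤ ξ) : ξ - 1 / 2 * log ξ - 3 ≤ log (besselI1 ξ) := by
  have hξ0 : 0 < ξ := by linarith
  have hlog8 : log 8 = 3 * log 2 := by
    rw [show (8 : ℝ) = 2 ^ 3 by norm_num, log_pow, Nat.cast_ofNat]
  have hlog4 : log 4 = 2 * log 2 := by
    rw [show (4 : ℝ) = 2 ^ 2 by norm_num, log_pow, Nat.cast_ofNat]
  have hpi : log (2 * π) ≤ log 8 := log_le_log (by positivity) (by linarith [pi_le_four])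
  have hI : exp ξ / √(2 * π * ξ) / 4 ≤ besselI1 ξ := by
    have hinv : 3 / (4 * ξ) ≤ 3 / 4 := by
      gcongr
      linarith
    refine le_trans ?_ (le_besselI1 hξ0)
    rw [div_eq_mul_inv _ 4]
    gcongr
    linarith
  have hlog := log_le_log (by positivity) hI
  rw [log_div (by positivity) four_ne_zero, log_div (exp_pos _).ne' (by positivity), log_exp,
    log_sqrt (by positivity), log_mul (by positivity) hξ0.ne'] at hlog
  linarith [log_two_lt_d9]

theorem abs_log_besselI1_sub_le (hξ : 0 < ξ) :
    |log (besselI1 ξ) - (ξ - 1 / 2 * log ξ)| ≤ 3 * (1 + ξ ^ (-(1 / 2) : ℝ)) := by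
  have hq : 0 < ξ ^ (-(1 / 2) : ℝ) := rpow_pos_of_pos hξ _
  have hupper := log_besselI1_le hξ
  rw [abs_of_nonpos (by linarith)]
  rcases le_total ξ 1 with h | h
  · have hlower := log_le_log (half_pos hξ) (half_le_besselI1 hξ.le)
    rw [log_div hξ.ne' two_ne_zero] at hlower
    have hlog := (log_rpow hξ (-(1 / 2))).symm.trans_le (log_le_sub_one_of_pos hq)
    linarith [log_two_lt_d9]
  · linarith [le_log_besselI1_of_one_le h]

theorem abs_besselWeight_mul_log_sub_le (ha : 1 ≤ a) (hξ : 0 < ξ) :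
    |besselWeight a ξ * log (besselI1 ξ) - expWeight a ξ * (ξ - 1 / 2 * log ξ)| ≤
      23 * ((1 + ξ ^ (-(1 / 2) : ℝ)) * exp (-(a - 1) * ξ)) := by
  have hq : 0 < ξ ^ (-(1 / 2) : ℝ) := rpow_pos_of_pos hξ _
  have hdiff := abs_besselWeight_sub_expWeight_le ha hξ
  have hlog := abs_log_besselI1_sub_le hξ
  have hW : |besselWeight a ξ| ≤ 5 * exp (-(a - 1) * ξ) := by
    have hE := exp_pos (-(a - 1) * ξ)
    have hdiff' : 4 * exp (-(a - 1) * ξ) / (1 + ξ) ≤ 4 * exp (-(a - 1) * ξ) :=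
      div_le_self (by positivity) (by linarith)
    rw [abs_of_pos (besselWeight_pos (zero_lt_one.trans_le ha) hξ)]
    linarith [le_of_abs_le hdiff, expWeight_le ha ξ]
  have hl : |ξ - 1 / 2 * log ξ| ≤ 2 * ((1 + ξ) * (1 + ξ ^ (-(1 / 2) : ℝ))) := by
    have h := abs_le.1 (abs_log_le_add_two_mul_rpow hξ)
    rw [abs_le]
    constructor <;> nlinarith [mul_pos hξ hq]
  set W := besselWeight a ξ
  set M := expWeight a ξ
  set L := log (besselI1 ξ)
  set l := ξ - 1 / 2 * log ξ
  calc |W * L - M * l| = |W * (L - l) + (W - M) * l| := by ring_nf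
    _ ≤ |W| * |L - l| + |W - M| * |l| := by
        rw [← abs_mul, ← abs_mul]
        exact abs_add_le _ _
    _ ≤ 5 * exp (-(a - 1) * ξ) * (3 * (1 + ξ ^ (-(1 / 2) : ℝ))) +
          4 * exp (-(a - 1) * ξ) / (1 + ξ) * (2 * ((1 + ξ) * (1 + ξ ^ (-(1 / 2) : ℝ)))) := by
        gcongr
    _ = 23 * ((1 + ξ ^ (-(1 / 2) : ℝ)) * exp (-(a - 1) * ξ)) := by
        field_simp
        ring

theorem measurable_besselWeight (a : ℝ) : Measurable (besselWeight a) :=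
  (measurable_id.mul (measurable_besselK1.comp (measurable_const_mul a))).mul measurable_besselI1

end Integrand

section LaplaceIntegrals

variable {q δ : ℝ}

theorem integrableOn_rpow_mul_exp_neg_mul (hq : -1 < q) (hδ : 0 < δ) :
    IntegrableOn (fun ξ : ℝ => ξ ^ q * exp (-δ * ξ)) (Ioi 0) := by
  simpa only [rpow_one] using integrableOn_rpow_mul_exp_neg_mul_rpow hq one_pos hδ

theorem integral_rpow_mul_exp_neg_mul (hq : -1 < q) (hδ : 0 < δ) :
    ∫ ξ in Ioi (0 : ℝ), ξ ^ q * exp (-δ * ξ) = δ ^ (-(q + 1)) * Gamma (q + 1) := by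
  simpa only [rpow_one, div_one, mul_one] using integral_rpow_mul_exp_neg_mul_rpow one_pos hq hδ

theorem integral_exp_neg_mul (hδ : 0 < δ) : ∫ ξ in Ioi (0 : ℝ), exp (-δ * ξ) = δ⁻¹ := by
  simpa only [rpow_zero, one_mul, zero_add, Gamma_one, mul_one, rpow_neg_one] using
    integral_rpow_mul_exp_neg_mul (q := 0) (by norm_num) hδ

theorem integrableOn_mul_exp_neg_mul (hδ : 0 < δ) :
    IntegrableOn (fun ξ : ℝ => ξ * exp (-δ * ξ)) (Ioi 0) := by
  simpa only [rpow_one] using integrableOn_rpow_mul_exp_neg_mul (q := 1) (by norm_num) hδ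

theorem integral_mul_exp_neg_mul (hδ : 0 < δ) :
    ∫ ξ in Ioi (0 : ℝ), ξ * exp (-δ * ξ) = 1 / δ ^ 2 := by
  have h := integral_rpow_mul_exp_neg_mul (q := 1) (by norm_num) hδ
  simp only [rpow_one] at h
  rw [h, one_add_one_eq_two, Gamma_two, mul_one, rpow_neg hδ.le, rpow_two, one_div]

theorem integrableOn_log_mul_exp_neg_mul (hδ : 0 < δ) :
    IntegrableOn (fun ξ : ℝ => log ξ * exp (-δ * ξ)) (Ioi 0) := by
  have hsqrt := integrableOn_rpow_mul_exp_neg_mul (q := -(1 / 2)) (by norm_num) hδ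
  refine Integrable.mono' ((integrableOn_mul_exp_neg_mul hδ).add (hsqrt.const_mul 2))
    (by fun_prop : Measurable fun ξ : ℝ => log ξ * exp (-δ * ξ)).aestronglyMeasurable ?_
  refine (ae_restrict_iff' measurableSet_Ioi).2 (ae_of_all _ fun ξ (hξ : 0 < ξ) => ?_)
  calc ‖log ξ * exp (-δ * ξ)‖ = |log ξ| * exp (-δ * ξ) := by
        rw [norm_mul, norm_of_nonneg (exp_pos _).le, norm_eq_abs]
    _ ≤ (ξ + 2 * ξ ^ (-(1 / 2) : ℝ)) * exp (-δ * ξ) := by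
        gcongr
        exact abs_log_le_add_two_mul_rpow hξ
    _ = ξ * exp (-δ * ξ) + 2 * (ξ ^ (-(1 / 2) : ℝ) * exp (-δ * ξ)) := by ring

theorem integral_log_mul_exp_neg_mul (hδ : 0 < δ) :
    ∫ ξ in Ioi (0 : ℝ), log ξ * exp (-δ * ξ) =
      ((∫ u in Ioi (0 : ℝ), log u * exp (-u)) - log δ) / δ := by
  have hscale : ∫ ξ in Ioi (0 : ℝ), log (δ * ξ) * exp (-(δ * ξ)) =
      δ⁻¹ * ∫ u in Ioi (0 : ℝ), log u * exp (-u) := by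
    simpa only [mul_zero, smul_eq_mul] using
      integral_comp_mul_left_Ioi (fun u => log u * exp (-u)) 0 hδ
  have hsplit : ∫ ξ in Ioi (0 : ℝ), log (δ * ξ) * exp (-(δ * ξ)) =
      ∫ ξ in Ioi (0 : ℝ), (log δ * exp (-δ * ξ) + log ξ * exp (-δ * ξ)) := by
    refine setIntegral_congr_fun measurableSet_Ioi fun ξ hξ => ?_
    rw [log_mul hδ.ne' (ne_of_gt hξ), neg_mul]
    ring
  rw [hsplit, integral_add ((exp_neg_integrableOn_Ioi 0 hδ).const_mul _)
    (integrableOn_log_mul_exp_neg_mul hδ), integral_const_mul, integral_exp_neg_mul hδ] at hscale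
  rw [eq_sub_of_add_eq' hscale]
  ring

end LaplaceIntegrals

section BesselWeightIntegral

variable {δ : ℝ}

theorem expWeight_one_add_mul (δ ξ : ℝ) :
    expWeight (1 + δ) ξ * (ξ - 1 / 2 * log ξ) =
      1 / (2 * √(1 + δ)) * (ξ * exp (-δ * ξ) - 1 / 2 * (log ξ * exp (-δ * ξ))) := by
  rw [expWeight, add_sub_cancel_left]
  ring

theorem integrableOn_expWeight_mul (hδ : 0 < δ) :
    IntegrableOn (fun ξ => expWeight (1 + δ) ξ * (ξ - 1 / 2 * log ξ)) (Ioi 0) := by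
  simp only [expWeight_one_add_mul]
  exact ((integrableOn_mul_exp_neg_mul hδ).sub
    ((integrableOn_log_mul_exp_neg_mul hδ).const_mul _)).const_mul _

theorem integral_expWeight_mul (hδ : 0 < δ) :
    ∫ ξ in Ioi (0 : ℝ), expWeight (1 + δ) ξ * (ξ - 1 / 2 * log ξ) =
      1 / (2 * √(1 + δ)) *
        (1 / δ ^ 2 - 1 / 2 * (((∫ u in Ioi (0 : ℝ), log u * exp (-u)) - log δ) / δ)) := by
  simp only [expWeight_one_add_mul]
  rw [integral_const_mul, integral_sub (integrableOn_mul_exp_neg_mul hδ)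
    ((integrableOn_log_mul_exp_neg_mul hδ).const_mul _), integral_const_mul,
    integral_mul_exp_neg_mul hδ, integral_log_mul_exp_neg_mul hδ]

theorem integral_one_add_rpow_mul_exp_neg_mul_le (hδ : 0 < δ) (hδ1 : δ ≤ 1) :
    ∫ ξ in Ioi (0 : ℝ), (1 + ξ ^ (-(1 / 2) : ℝ)) * exp (-δ * ξ) ≤ 3 * δ⁻¹ := by
  have hpow : δ ^ (-(1 / 2) : ℝ) ≤ δ⁻¹ := by
    rw [← rpow_neg_one]
    exact rpow_le_rpow_of_exponent_ge hδ hδ1 (by norm_num)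
  have hpi : √π ≤ 2 := sqrt_le_iff.2 ⟨by norm_num, by linarith [pi_le_four]⟩
  simp only [add_mul, one_mul]
  calc ∫ ξ in Ioi (0 : ℝ), (exp (-δ * ξ) + ξ ^ (-(1 / 2) : ℝ) * exp (-δ * ξ))
      = δ⁻¹ + δ ^ (-(1 / 2) : ℝ) * √π := by
        rw [integral_add (exp_neg_integrableOn_Ioi 0 hδ)
            (integrableOn_rpow_mul_exp_neg_mul (by norm_num) hδ), integral_exp_neg_mul hδ,
          integral_rpow_mul_exp_neg_mul (by norm_num) hδ,
          show -(1 / 2 : ℝ) + 1 = 1 / 2 by norm_num, Gamma_one_half_eq]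
    _ ≤ δ⁻¹ + δ⁻¹ * 2 := by gcongr
    _ = 3 * δ⁻¹ := by ring

theorem abs_integral_besselWeight_mul_log_sub_le (hδ : 0 < δ) (hδ1 : δ ≤ 1) :
    |(∫ ξ in Ioi (0 : ℝ), besselWeight (1 + δ) ξ * log (besselI1 ξ)) -
        ∫ ξ in Ioi (0 : ℝ), expWeight (1 + δ) ξ * (ξ - 1 / 2 * log ξ)| ≤ 69 * δ⁻¹ := by
  set f := fun ξ => besselWeight (1 + δ) ξ * log (besselI1 ξ)
  set g := fun ξ => expWeight (1 + δ) ξ * (ξ - 1 / 2 * log ξ)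
  set bound := fun ξ : ℝ => 23 * ((1 + ξ ^ (-(1 / 2) : ℝ)) * exp (-δ * ξ))
  have hg : IntegrableOn g (Ioi 0) := integrableOn_expWeight_mul hδ
  have hf : Measurable f :=
    (measurable_besselWeight _).mul (measurable_log.comp measurable_besselI1)
  have hbound : IntegrableOn bound (Ioi 0) := by
    simp only [bound, add_mul, one_mul]
    exact ((exp_neg_integrableOn_Ioi 0 hδ).add
      (integrableOn_rpow_mul_exp_neg_mul (by norm_num) hδ)).const_mul 23
  have hle : ∀ᵐ ξ ∂volume.restrict (Ioi 0), ‖(f - g) ξ‖ ≤ bound ξ := by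
    refine (ae_restrict_iff' measurableSet_Ioi).2 (ae_of_all _ fun ξ hξ => ?_)
    have h := abs_besselWeight_mul_log_sub_le (by linarith : 1 ≤ 1 + δ) hξ
    rwa [add_sub_cancel_left] at h
  have hsub : IntegrableOn (f - g) (Ioi 0) :=
    hbound.mono' (hf.aestronglyMeasurable.sub hg.aestronglyMeasurable) hle
  have hf' : IntegrableOn f (Ioi 0) := by
    simpa only [sub_add_cancel] using hsub.add hg
  calc |(∫ ξ in Ioi (0 : ℝ), f ξ) - ∫ ξ in Ioi (0 : ℝ), g ξ|
      = ‖∫ ξ in Ioi (0 : ℝ), (f - g) ξ‖ := by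
        rw [← integral_sub hf' hg, norm_eq_abs]
        rfl
    _ ≤ ∫ ξ in Ioi (0 : ℝ), bound ξ := norm_integral_le_of_norm_le hbound hle
    _ ≤ 69 * δ⁻¹ := by
        rw [integral_const_mul]
        linarith [integral_one_add_rpow_mul_exp_neg_mul_le hδ hδ1]

theorem isBigO_integral_besselWeight_mul_log_sub :
    (fun δ => (∫ ξ in Ioi (0 : ℝ), besselWeight (1 + δ) ξ * log (besselI1 ξ)) -
      1 / (2 * √(1 + δ)) * (1 / δ ^ 2 + log δ / (2 * δ))) =O[𝓝[>] 0] fun δ => δ⁻¹ := by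
  set c := ∫ u in Ioi (0 : ℝ), log u * exp (-u) with hc
  refine IsBigO.of_bound (69 + |c|) ?_
  filter_upwards [Ioo_mem_nhdsGT one_pos] with δ hδ
  have hδ0 : 0 < δ := hδ.1
  have hdiff := abs_integral_besselWeight_mul_log_sub_le hδ0 hδ.2.le
  have hconst : |1 / (4 * √(1 + δ)) * c| ≤ |c| := by
    rw [abs_mul, abs_of_pos (by positivity)]
    refine mul_le_of_le_one_left (abs_nonneg c) ((div_le_one (by positivity)).2 ?_)
    linarith [one_le_sqrt.2 (by linarith : 1 ≤ 1 + δ)]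
  rw [integral_expWeight_mul hδ0, ← hc] at hdiff
  set J := ∫ ξ in Ioi (0 : ℝ), besselWeight (1 + δ) ξ * log (besselI1 ξ)
  rw [norm_eq_abs, norm_of_nonneg (inv_pos.2 hδ0).le]
  calc |J - 1 / (2 * √(1 + δ)) * (1 / δ ^ 2 + log δ / (2 * δ))|
      = |(J - 1 / (2 * √(1 + δ)) * (1 / δ ^ 2 - 1 / 2 * ((c - log δ) / δ))) -
          1 / (4 * √(1 + δ)) * c * δ⁻¹| := by
        congr 1
        ring
    _ ≤ 69 * δ⁻¹ + |c| * δ⁻¹ := by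
        refine (abs_sub _ _).trans (add_le_add hdiff ?_)
        rw [abs_mul, abs_of_pos (inv_pos.2 hδ0)]
        gcongr
    _ = (69 + |c|) * δ⁻¹ := by ring

end BesselWeightIntegral

section AsymptoticExpansion

theorem Fint_eq_integral_besselWeight (ρ : ℝ) :
    Fint ρ = ∫ ξ in Ioi (0 : ℝ), besselWeight √(1 + ρ⁻¹) ξ * log (besselI1 ξ) :=
  rfl

theorem isBigO_log_inv_nhdsGT_zero : log =O[𝓝[>] 0] fun δ : ℝ => δ⁻¹ := by
  simpa only [rpow_neg_one] using (isLittleO_log_rpow_nhdsGT_zero neg_one_lt_zero).isBigO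

theorem isBigO_two_add_mul_sqrt_sub_one :
    (fun δ : ℝ => (2 + δ) * √(1 + δ) / 2 - 1) =O[𝓝[>] 0] fun δ => δ := by
  have hdiff : DifferentiableAt ℝ (fun δ : ℝ => (2 + δ) * √(1 + δ) / 2) 0 := by
    have hsqrt : DifferentiableAt ℝ (fun δ : ℝ => √(1 + δ)) 0 :=
      DifferentiableAt.sqrt (by fun_prop) (by norm_num)
    fun_prop
  simpa only [add_zero, sqrt_one, mul_one, div_self (two_ne_zero' ℝ), sub_zero] using
    hdiff.isBigO_sub.mono nhdsWithin_le_nhds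

theorem mul_inv_eventuallyEq_one_nhdsGT_zero : (fun δ : ℝ => δ * δ⁻¹) =ᶠ[𝓝[>] 0] fun _ => 1 := by
  filter_upwards [self_mem_nhdsWithin] with δ (hδ : 0 < δ) using mul_inv_cancel₀ hδ.ne'

theorem scaled_leading_term_eq {δ : ℝ} (hδ : 0 < δ) :
    δ * (2 + δ) * (1 + δ) * (1 / (2 * √(1 + δ)) * (1 / δ ^ 2 + log δ / (2 * δ))) =
      (2 + δ) * √(1 + δ) / 2 * (δ⁻¹ + 1 / 2 * log δ) := by
  have hsq : √(1 + δ) ^ 2 = 1 + δ := sq_sqrt (by positivity)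
  have hsqrt : √(1 + δ) ≠ 0 := by positivity
  field_simp
  rw [hsq]

theorem scaled_integral_besselWeight_isBigO_one :
    (fun δ => δ * (2 + δ) * (1 + δ) *
        (∫ ξ in Ioi (0 : ℝ), besselWeight (1 + δ) ξ * log (besselI1 ξ)) -
      2 * (δ * (2 + δ))⁻¹ - 1 / 2 * log (δ * (2 + δ))) =O[𝓝[>] 0] fun _ => (1 : ℝ) := by
  set J : ℝ → ℝ := fun δ => ∫ ξ in Ioi (0 : ℝ), besselWeight (1 + δ) ξ * log (besselI1 ξ)
  have hremainder : (fun δ => (2 + δ) * (1 + δ) *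
      (δ * (J δ - 1 / (2 * √(1 + δ)) * (1 / δ ^ 2 + log δ / (2 * δ)))))
      =O[𝓝[>] 0] fun _ => (1 : ℝ) := by
    have hpoly : ContinuousAt (fun δ : ℝ => (2 + δ) * (1 + δ)) 0 := by fun_prop
    have hR := ((isBigO_refl id (𝓝[>] (0 : ℝ))).mul
      isBigO_integral_besselWeight_mul_log_sub).trans_eventuallyEq
        mul_inv_eventuallyEq_one_nhdsGT_zero
    simpa only [id_eq, one_mul] using
      ((hpoly.tendsto.mono_left nhdsWithin_le_nhds).isBigO_one ℝ).mul hR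
  have hleading : (fun δ : ℝ => ((2 + δ) * √(1 + δ) / 2 - 1) * (δ⁻¹ + 1 / 2 * log δ))
      =O[𝓝[>] 0] fun _ => (1 : ℝ) :=
    (isBigO_two_add_mul_sqrt_sub_one.mul ((isBigO_refl _ _).add
      (isBigO_log_inv_nhdsGT_zero.const_mul_left _))).trans_eventuallyEq
        mul_inv_eventuallyEq_one_nhdsGT_zero
  have hregular : (fun δ : ℝ => 1 / (2 + δ) - 1 / 2 * log (2 + δ))
      =O[𝓝[>] 0] fun _ => (1 : ℝ) := by
    have hcont : ContinuousAt (fun δ : ℝ => 1 / (2 + δ) - 1 / 2 * log (2 + δ)) 0 := by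
      fun_prop (disch := norm_num)
    exact (hcont.tendsto.mono_left nhdsWithin_le_nhds).isBigO_one ℝ
  refine ((hremainder.add hleading).add hregular).congr' ?_ .rfl
  filter_upwards [self_mem_nhdsWithin] with δ (hδ : 0 < δ)
  have hpartial : 2 * (δ * (2 + δ))⁻¹ = δ⁻¹ - 1 / (2 + δ) := by
    field_simp
    ring
  rw [log_mul hδ.ne' (by positivity), hpartial]
  linear_combination -scaled_leading_term_eq hδ

theorem tendsto_sqrt_one_add_inv_sub_one :
    Tendsto (fun ρ : ℝ => √(1 + ρ⁻¹) - 1) atTop (𝓝[>] 0) := by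
  refine tendsto_nhdsWithin_iff.2 ⟨?_, ?_⟩
  · have h : Tendsto (fun ρ : ℝ => √(1 + ρ⁻¹) - 1) atTop (𝓝 (√(1 + 0) - 1)) :=
      ((tendsto_inv_atTop_zero.const_add 1).sqrt).sub_const 1
    rwa [add_zero, sqrt_one, sub_self] at h
  · filter_upwards [eventually_gt_atTop 0] with ρ hρ
    rw [mem_Ioi, sub_pos, lt_sqrt zero_le_one, one_pow]
    exact lt_add_of_pos_right 1 (inv_pos.2 hρ)

theorem scaled_Fint_sub_isBigO_one :
    (fun ρ : ℝ => ρ⁻¹ * √(1 + ρ⁻¹) * Fint ρ - 2 * ρ + 1 / 2 * log ρ)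
      =O[atTop] fun _ => (1 : ℝ) := by
  refine (scaled_integral_besselWeight_isBigO_one.comp_tendsto
    tendsto_sqrt_one_add_inv_sub_one).congr' ?_ .rfl
  filter_upwards [eventually_gt_atTop 0] with ρ hρ
  have hinv : (√(1 + ρ⁻¹) - 1) * (2 + (√(1 + ρ⁻¹) - 1)) = ρ⁻¹ := by
    linear_combination sq_sqrt (by positivity : 0 ≤ 1 + ρ⁻¹)
  simp only [Function.comp_apply]
  rw [hinv, add_sub_cancel, ← Fint_eq_integral_besselWeight, inv_inv, log_inv]
  ring

end AsymptoticExpansion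

/-- ρ⁻¹ √(1+ρ⁻¹) F(ρ) = 2ρ − (1/2) log ρ + o(log ρ) as ρ → ∞. -/
theorem stmt_8 :
    Tendsto
      (fun ρ : ℝ =>
        (ρ⁻¹ * Real.sqrt (1 + ρ⁻¹) * Fint ρ - 2 * ρ + (1 / 2) * Real.log ρ) / Real.log ρ)
      atTop (nhds 0) := by
  simpa only [one_div] using (scaled_Fint_sub_isBigO_one.trans_isLittleO
    isLittleO_const_log_atTop).tendsto_div_nhds_zero
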